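/- Let α≥0, 0<ε<1/100, and let g:cl(ℝ³₊)→ℝ be C¹, bounded and with bounded gradient. Then: (a) I_α(g)(x) = ∫₀^ε e^{−αξ} ∫_{ℝ³₊} g(y) η_ε(x'−y', x₃+y₃+ξ) dy dξ for all x∈cl(ℝ³₊), I_α(g) is C^∞ on ℝ³₊, and I_α(g)(x)=0 whenever x₃>ε; (b) ∂_{x_i} I_α(g) = I_α(∂_{y_i} g) for i=1,2; (c) ∂_{x₃} I_α(g)(x) = α I_α(g)(x) − ∫_{ℝ³₊} g(y) η_ε(x−y*) dy; and (d) ∂_{x₃} I_α(g)(x) = −I_α(∂_{y₃} g)(x) − ∫₀^∞ e^{−αξ} ∫_{ℝ²} g(y',0) η_ε(x'−y', x₃+ξ) dy' dξ. -/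

import Mathlib

/-!
With the affine shift `B(ξ, y) = ξ e₃ - y*`, the operator is a superposition of translates of the
mollifier, `I_α(g)(x) = ∫ e^{-αξ} g(y) η_ε(x + B(ξ, y)) d(ξ, y)` over `(0, ∞) × ℝ³₊` (`Ialpha_eq`).
On this domain `ξ` and `|y|` are both at most `|B(ξ, y)|` (`le_of_norm_shiftB_le`), so a compactly
supported kernel only sees a bounded part of the domain, locally uniformly in `x`. Dominated
convergence then gives smoothness, with every `x`-derivative falling on the kernel
(`fderiv_weight_kernel`, `contDiff_weight_kernel`); this holds at every point of `ℝ³`, in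
particular up to the boundary of the half space.

The formulas for the derivatives are integrations by parts against the differentiated kernel.
For (b) and (d) the derivative is moved to `g` in the variable `y` at fixed `ξ`
(`integral_parts_of_ne`, `integral_parts_two`); the reflection `y ↦ y*` explains the sign change in
the normal direction, and the boundary `y₃ = 0` contributes the integral over `ℝ²`. For (c), the
`x₃`-derivative of the kernel equals its `ξ`-derivative, and one integrates by parts in `ξ` at
fixed `y` (`integral_Ioi_pd_two`). The truncation and vanishing claims in (a) are support
considerations (`inner_eq_zero`).
-/

open MeasureTheory Set Filter

noncomputable section

/-- ℝ³ with the Euclidean structure. -/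
abbrev V3 : Type := EuclideanSpace ℝ (Fin 3)

/-- The `j`-th coordinate vector of ℝ³. -/
def e3 (j : Fin 3) : V3 := EuclideanSpace.single j (1 : ℝ)

/-- The partial derivative `∂_j f` of a scalar function on ℝ³. -/
def pd (j : Fin 3) (f : V3 → ℝ) (x : V3) : ℝ := fderiv ℝ f x (e3 j)

/-- The point `(a,b,c)` of ℝ³. -/
def mk3 (a b c : ℝ) : V3 := (WithLp.equiv 2 (Fin 3 → ℝ)).symm ![a, b, c]

/-- The reflected point `x* = (x', -x₃)`. -/
def refl3 (x : V3) : V3 := mk3 (x 0) (x 1) (-(x 2))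

/-- Signs for the even-even-odd extension. -/
def sgn3 (i : Fin 3) : ℝ := if i = 2 then -1 else 1

/-- The open upper half space ℝ³₊. -/
def Hplus : Set V3 := {x : V3 | 0 < x 2}

/-- The half cylinder C₊(R) = B'(R) × (0,R). -/
def Cplus (R : ℝ) : Set V3 := {x : V3 | (x 0)^2 + (x 1)^2 < R^2 ∧ 0 < x 2 ∧ x 2 < R}

/-- The full cylinder C(R) = B'(R) × (-R,R). -/
def Ccyl (R : ℝ) : Set V3 := {x : V3 | (x 0)^2 + (x 1)^2 < R^2 ∧ -R < x 2 ∧ x 2 < R}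

/-- The flat boundary disk Γ(R) = B'(R) × {0}. -/
def Gam (R : ℝ) : Set V3 := {x : V3 | (x 0)^2 + (x 1)^2 < R^2 ∧ x 2 = 0}

/-- The time interval (-R², 0), so that Q₊(R) = C₊(R) × TI R. -/
def TI (R : ℝ) : Set ℝ := Ioo (-(R^2)) 0

/-- Divergence of a vector field on ℝ³. -/
def vdiv (v : V3 → V3) (x : V3) : ℝ := ∑ j, pd j (fun y => v y j) x

/-- Laplacian of a scalar function on ℝ³. -/
def lap (f : V3 → ℝ) (x : V3) : ℝ := ∑ j, pd j (fun y => pd j f y) x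

/-- Curl of a vector field on ℝ³. -/
def curl3 (v : V3 → V3) (x : V3) : V3 :=
  mk3 (pd 1 (fun y => v y 2) x - pd 2 (fun y => v y 1) x)
      (pd 2 (fun y => v y 0) x - pd 0 (fun y => v y 2) x)
      (pd 0 (fun y => v y 1) x - pd 1 (fun y => v y 0) x)

/-- Membership in the mixed Lebesgue space L^r(I; L^q(Ω)):
joint measurability, a.e.-in-time q-integrability in space, and
r/q-integrability in time of the spatial integrals. -/
def MemLqr {X E : Type*} [MeasureSpace X] [NormedAddCommGroup E]
    (q r : ℝ) (Ω : Set X) (I : Set ℝ) (u : ℝ → X → E) : Prop :=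
  AEStronglyMeasurable (fun p : ℝ × X => u p.1 p.2)
      ((volume.restrict I).prod (volume.restrict Ω)) ∧
  (∀ᵐ t ∂(volume.restrict I), IntegrableOn (fun x => ‖u t x‖ ^ q) Ω) ∧
  IntegrableOn (fun t => (∫ x in Ω, ‖u t x‖ ^ q) ^ (r / q)) I

/-- The mixed Lebesgue norm ‖u‖_{L^{q,r}(Ω × I)} = ‖ t ↦ ‖u(·,t)‖_{L^q(Ω)} ‖_{L^r(I)}. -/
def LqrNorm {X E : Type*} [MeasureSpace X] [NormedAddCommGroup E]
    (q r : ℝ) (Ω : Set X) (I : Set ℝ) (u : ℝ → X → E) : ℝ :=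
  (∫ t in I, (∫ x in Ω, ‖u t x‖ ^ q) ^ (r / q)) ^ (1 / r)

/-- Test fields for very weak solutions: divergence-free C^{2,1} fields compactly
supported in Q₊(R) ∪ Σ_R satisfying the Navier boundary condition (3.3). -/
structure IsTestVW (R α : ℝ) (Φ : ℝ → V3 → V3) : Prop where
  smooth : ContDiff ℝ 2 (fun p : ℝ × V3 => Φ p.1 p.2)
  supp : tsupport (fun p : ℝ × V3 => Φ p.1 p.2) ⊆ (TI R) ×ˢ (Cplus R ∪ Gam R)
  divfree : ∀ t x, vdiv (Φ t) x = 0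
  bc12 : ∀ (t : ℝ) (x : V3), x 2 = 0 → ∀ k : Fin 3, k ≠ 2 →
    pd 2 (fun y => Φ t y k) x - α * Φ t x k = 0
  bc3 : ∀ (t : ℝ) (x : V3), x 2 = 0 → Φ t x 2 = 0

/-- Test fields for weak solutions: divergence-free C¹ fields compactly supported
in Q₊(R) ∪ Σ_R with vanishing normal component on the flat boundary. -/
structure IsTestW (R : ℝ) (Φ : ℝ → V3 → V3) : Prop where
  smooth : ContDiff ℝ 1 (fun p : ℝ × V3 => Φ p.1 p.2)
  supp : tsupport (fun p : ℝ × V3 => Φ p.1 p.2) ⊆ (TI R) ×ˢ (Cplus R ∪ Gam R)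
  divfree : ∀ t x, vdiv (Φ t) x = 0
  bc3 : ∀ (t : ℝ) (x : V3), x 2 = 0 → Φ t x 2 = 0

/-- Test fields for weak solution pairs: C¹ fields compactly supported
in Q₊(R) ∪ Σ_R with vanishing normal component on the flat boundary
(not necessarily divergence free). -/
structure IsTestP (R : ℝ) (Φ : ℝ → V3 → V3) : Prop where
  smooth : ContDiff ℝ 1 (fun p : ℝ × V3 => Φ p.1 p.2)
  supp : tsupport (fun p : ℝ × V3 => Φ p.1 p.2) ⊆ (TI R) ×ˢ (Cplus R ∪ Gam R)
  bc3 : ∀ (t : ℝ) (x : V3), x 2 = 0 → Φ t x 2 = 0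

/-- Smooth scalar test functions compactly supported in the interior of Q₊(R). -/
def IsIntTest (R : ℝ) (χ : ℝ → V3 → ℝ) : Prop :=
  ContDiff ℝ (⊤ : ℕ∞) (fun p : ℝ × V3 => χ p.1 p.2) ∧
  tsupport (fun p : ℝ × V3 => χ p.1 p.2) ⊆ (TI R) ×ˢ (Cplus R)

/-- `du` is the (spatial) weak gradient of `u` in Q₊(R): (du)_{ij} = ∂_j u_i. -/
def IsWeakGrad (R : ℝ) (u : ℝ → V3 → V3) (du : ℝ → V3 → Fin 3 → Fin 3 → ℝ) : Prop :=
  ∀ χ, IsIntTest R χ → ∀ i j : Fin 3,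
    (∫ t in TI R, ∫ x in Cplus R, du t x i j * χ t x) =
      -(∫ t in TI R, ∫ x in Cplus R, u t x i * pd j (χ t) x)

/-- `u(·,t)` is divergence free in C₊(R) with vanishing normal trace on the flat
boundary, expressed via (2.10): ∫ u·∇Ψ = 0 for all Ψ ∈ C¹_c(C₊(R) ∪ Γ_R). -/
def NormalBC (R : ℝ) (u : ℝ → V3 → V3) : Prop :=
  ∀ᵐ t ∂(volume.restrict (TI R)), ∀ Ψ : V3 → ℝ, ContDiff ℝ 1 Ψ →
    tsupport Ψ ⊆ Cplus R ∪ Gam R →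
    (∫ x in Cplus R, ∑ j, u t x j * pd j Ψ x) = 0

/-- Very weak solution of the Stokes system in Q₊(R) with Navier boundary
condition with friction coefficient α on the flat boundary (Definition 2.4). -/
structure IsVeryWeakSol (R α : ℝ) (u f : ℝ → V3 → V3)
    (F : ℝ → V3 → Fin 3 → Fin 3 → ℝ) : Prop where
  intu : IntegrableOn (fun p : ℝ × V3 => u p.1 p.2) ((TI R) ×ˢ (Cplus R))
  intf : IntegrableOn (fun p : ℝ × V3 => f p.1 p.2) ((TI R) ×ˢ (Cplus R))
  intF : IntegrableOn (fun p : ℝ × V3 => F p.1 p.2) ((TI R) ×ˢ (Cplus R))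
  normal : NormalBC R u
  eq : ∀ Φ, IsTestVW R α Φ →
    -(∫ t in TI R, ∫ x in Cplus R,
        ∑ i, u t x i * (deriv (fun s => Φ s x i) t + lap (fun y => Φ t y i) x)) =
      ∫ t in TI R, ∫ x in Cplus R,
        ((∑ i, f t x i * Φ t x i) - ∑ i, ∑ j, F t x i j * pd j (fun y => Φ t y i) x)

/-- Weak solution of the Stokes system in Q₊(R) with Navier boundary condition
with friction coefficient α on the flat boundary (Definition 2.5); `du` is the
weak spatial gradient of `u`.  The boundary term α ∬_Σ u_k Φ_k is expressed,
via the Gauss–Green formula ∬_Σ u_k Φ_k = -∬_{Q₊} ∂₃(u_k Φ_k), in terms of the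
weak gradient, which avoids invoking a trace operator. -/
structure IsWeakSol (R α : ℝ) (u : ℝ → V3 → V3) (du : ℝ → V3 → Fin 3 → Fin 3 → ℝ)
    (f : ℝ → V3 → V3) (F : ℝ → V3 → Fin 3 → Fin 3 → ℝ) : Prop where
  intu : IntegrableOn (fun p : ℝ × V3 => u p.1 p.2) ((TI R) ×ˢ (Cplus R))
  intdu : IntegrableOn (fun p : ℝ × V3 => du p.1 p.2) ((TI R) ×ˢ (Cplus R))
  intf : IntegrableOn (fun p : ℝ × V3 => f p.1 p.2) ((TI R) ×ˢ (Cplus R))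
  intF : IntegrableOn (fun p : ℝ × V3 => F p.1 p.2) ((TI R) ×ˢ (Cplus R))
  grad : IsWeakGrad R u du
  normal : NormalBC R u
  eq : ∀ Φ, IsTestW R Φ →
    ((∫ t in TI R, ∫ x in Cplus R,
        (-(∑ i, u t x i * deriv (fun s => Φ s x i) t)
          + ∑ i, ∑ j, du t x i j * pd j (fun y => Φ t y i) x))
      - α * ∑ k : Fin 2, ∫ t in TI R, ∫ x in Cplus R,
          (du t x (Fin.castSucc k) 2 * Φ t x (Fin.castSucc k)
            + u t x (Fin.castSucc k) * pd 2 (fun y => Φ t y (Fin.castSucc k)) x))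
    = ∫ t in TI R, ∫ x in Cplus R,
        ((∑ i, f t x i * Φ t x i) - ∑ i, ∑ j, F t x i j * pd j (fun y => Φ t y i) x)

/-- Weak solution pair (u, pr) of the Stokes system in Q₊(R) with Navier
boundary condition with friction coefficient α on the flat boundary
(Definition 2.6); `du` is the weak spatial gradient of `u`, and the boundary
term is expressed as in `IsWeakSol`. -/
structure IsWeakSolPair (R α : ℝ) (u : ℝ → V3 → V3) (du : ℝ → V3 → Fin 3 → Fin 3 → ℝ)
    (pr : ℝ → V3 → ℝ) (f : ℝ → V3 → V3) (F : ℝ → V3 → Fin 3 → Fin 3 → ℝ) : Prop where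
  intu : IntegrableOn (fun p : ℝ × V3 => u p.1 p.2) ((TI R) ×ˢ (Cplus R))
  intdu : IntegrableOn (fun p : ℝ × V3 => du p.1 p.2) ((TI R) ×ˢ (Cplus R))
  intpr : IntegrableOn (fun p : ℝ × V3 => pr p.1 p.2) ((TI R) ×ˢ (Cplus R))
  intf : IntegrableOn (fun p : ℝ × V3 => f p.1 p.2) ((TI R) ×ˢ (Cplus R))
  intF : IntegrableOn (fun p : ℝ × V3 => F p.1 p.2) ((TI R) ×ˢ (Cplus R))
  grad : IsWeakGrad R u du
  normal : NormalBC R u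
  eq : ∀ Φ, IsTestP R Φ →
    ((∫ t in TI R, ∫ x in Cplus R,
        (-(∑ i, u t x i * deriv (fun s => Φ s x i) t)
          + (∑ i, ∑ j, du t x i j * pd j (fun y => Φ t y i) x)
          - pr t x * vdiv (Φ t) x))
      - α * ∑ k : Fin 2, ∫ t in TI R, ∫ x in Cplus R,
          (du t x (Fin.castSucc k) 2 * Φ t x (Fin.castSucc k)
            + u t x (Fin.castSucc k) * pd 2 (fun y => Φ t y (Fin.castSucc k)) x))
    = ∫ t in TI R, ∫ x in Cplus R,
        ((∑ i, f t x i * Φ t x i) - ∑ i, ∑ j, F t x i j * pd j (fun y => Φ t y i) x)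

/-- A mollifier: smooth, radial, supported in the unit ball, with integral 1. -/
def IsMollifier (η : V3 → ℝ) : Prop :=
  ContDiff ℝ (⊤ : ℕ∞) η ∧ tsupport η ⊆ Metric.closedBall 0 1 ∧
  (∀ x y : V3, ‖x‖ = ‖y‖ → η x = η y) ∧ (∫ x : V3, η x) = 1

/-- Rescaled mollifier η_ε(x) = ε⁻³ η(x/ε). -/
def mol (η : V3 → ℝ) (ε : ℝ) (x : V3) : ℝ := (ε ^ 3)⁻¹ * η (ε⁻¹ • x)

/-- Kernel η_ε⁺(x,y) = η_ε(x-y) + η_ε(x-y*). -/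
def molP (η : V3 → ℝ) (ε : ℝ) (x y : V3) : ℝ := mol η ε (x - y) + mol η ε (x - refl3 y)

/-- Kernel η_ε⁻(x,y) = η_ε(x-y) - η_ε(x-y*). -/
def molM (η : V3 → ℝ) (ε : ℝ) (x y : V3) : ℝ := mol η ε (x - y) - mol η ε (x - refl3 y)

/-- The mollified even extension E⁺(g). -/
def Ep (η : V3 → ℝ) (ε : ℝ) (g : V3 → ℝ) (x : V3) : ℝ := ∫ y in Hplus, g y * molP η ε x y

/-- The mollified odd extension E⁻(g). -/
def Em (η : V3 → ℝ) (ε : ℝ) (g : V3 → ℝ) (x : V3) : ℝ := ∫ y in Hplus, g y * molM η ε x y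

/-- The operator I_α of (2.13). -/
def Ialpha (η : V3 → ℝ) (ε α : ℝ) (g : V3 → ℝ) (x : V3) : ℝ :=
  ∫ ξ in Ioi (0:ℝ), Real.exp (-(α * ξ)) *
    ∫ y in Hplus, g y * mol η ε (mk3 (x 0 - y 0) (x 1 - y 1) (x 2 + y 2 + ξ))

/-- The heat kernel Γ(x,t) = (4πt)^{-3/2} exp(-|x|²/(4t)) on ℝ³. -/
def heatK (x : V3) (t : ℝ) : ℝ :=
  (4 * Real.pi * t) ^ (-(3:ℝ)/2) * Real.exp (-‖x‖^2 / (4*t))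

/-- The even-even-odd extension of a (time-dependent) vector field on the
half space to all of ℝ³. -/
def extV (u : ℝ → V3 → V3) : ℝ → V3 → V3 :=
  fun t x => if 0 ≤ x 2 then u t x
    else mk3 (u t (refl3 x) 0) (u t (refl3 x) 1) (-(u t (refl3 x) 2))

/-- The corresponding extension of a (time-dependent) matrix field,
with signs ε_i ε_j. -/
def extM (F : ℝ → V3 → Fin 3 → Fin 3 → ℝ) : ℝ → V3 → Fin 3 → Fin 3 → ℝ :=
  fun t x i j => if 0 ≤ x 2 then F t x i j else sgn3 i * sgn3 j * F t (refl3 x) i j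

/-- The extension of a (time-dependent) scalar field, even in x₃. -/
def extS (pr : ℝ → V3 → ℝ) : ℝ → V3 → ℝ :=
  fun t x => if 0 ≤ x 2 then pr t x else pr t (refl3 x)

/-! ### Integrals `∫ w(p) k(x + B(p)) dμ(p)` as functions of `x` -/

section Parametric

variable {P : Type*} [MeasurableSpace P] {μ : Measure P} {B : P → V3} {w : P → ℝ}

/-- A compactly supported continuous kernel is bounded, and on a ball of centres `x` the functions
`p ↦ k (x + B p)` all vanish where `‖B p‖` is large, so `|w| * |k (x + B ·)|` is dominated by one
integrable function. -/
lemma exists_dominating {F : Type*} [NormedAddCommGroup F] (hB : Measurable B)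
    (hw : ∀ R : ℝ, IntegrableOn w {p | ‖B p‖ ≤ R} μ)
    {k : V3 → F} (hk : Continuous k) (hks : HasCompactSupport k) (x₀ : V3) :
    ∃ b : P → ℝ, Integrable b μ ∧ ∀ p, ∀ x ∈ Metric.ball x₀ 1, |w p| * ‖k (x + B p)‖ ≤ b p := by
  obtain ⟨C, hC⟩ := hk.bounded_above_of_compact_support hks
  obtain ⟨R, hR⟩ := hks.isCompact.isBounded.subset_closedBall (0 : V3)
  set T : Set P := {p | ‖B p‖ ≤ R + ‖x₀‖ + 1} with hT
  have hTm : MeasurableSet T := measurableSet_le hB.norm measurable_const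
  refine ⟨T.indicator fun p => |w p| * C, ?_, ?_⟩
  · rw [integrable_indicator_iff hTm]
    exact ((hw _).norm.mul_const C)
  · intro p x hx
    by_cases hp : p ∈ T
    · rw [indicator_of_mem hp]
      exact mul_le_mul_of_nonneg_left (hC _) (abs_nonneg _)
    · rw [indicator_of_notMem hp]
      have : k (x + B p) = 0 := by
        by_contra h
        have h1 := hR (subset_tsupport _ h)
        rw [mem_closedBall_zero_iff] at h1
        apply hp
        have h2 : ‖x - x₀‖ < 1 := by simpa [dist_eq_norm] using hx
        have h3 : ‖B p‖ ≤ ‖x + B p‖ + ‖x - x₀‖ + ‖x₀‖ := by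
          calc ‖B p‖ = ‖(x + B p) - (x - x₀) - x₀‖ := by congr 1; abel
            _ ≤ ‖(x + B p) - (x - x₀)‖ + ‖x₀‖ := norm_sub_le _ _
            _ ≤ _ := by gcongr; exact norm_sub_le _ _
        simp only [hT, mem_ofPred_eq]
        linarith
      simp [this]

lemma integrable_weight_kernel (hB : Measurable B) (hwm : AEStronglyMeasurable w μ)
    (hw : ∀ R : ℝ, IntegrableOn w {p | ‖B p‖ ≤ R} μ)
    {k : V3 → ℝ} (hk : Continuous k) (hks : HasCompactSupport k) (x : V3) :
    Integrable (fun p => w p * k (x + B p)) μ := by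
  obtain ⟨b, hb, hle⟩ := exists_dominating hB hw hk hks x
  refine hb.mono' (hwm.mul (hk.measurable.comp (hB.const_add x)).aestronglyMeasurable) ?_
  refine Eventually.of_forall fun p => ?_
  have := hle p x (by simp)
  simpa using this

lemma hasFDerivAt_weight_kernel (hB : Measurable B) (hwm : AEStronglyMeasurable w μ)
    (hw : ∀ R : ℝ, IntegrableOn w {p | ‖B p‖ ≤ R} μ)
    {k : V3 → ℝ} (hk : ContDiff ℝ 1 k) (hks : HasCompactSupport k) (x : V3) :
    HasFDerivAt (fun x => ∫ p, w p * k (x + B p) ∂μ)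
      (∫ p, w p • fderiv ℝ k (x + B p) ∂μ) x ∧
    Integrable (fun p => w p • fderiv ℝ k (x + B p)) μ := by
  have hk' : Continuous (fderiv ℝ k) := hk.continuous_fderiv (by simp)
  obtain ⟨b, hb, hle⟩ := exists_dominating hB hw hk' (hks.fderiv ℝ) x
  have hm : AEStronglyMeasurable (fun p => w p • fderiv ℝ k (x + B p)) μ :=
    hwm.smul (hk'.measurable.comp (hB.const_add x)).aestronglyMeasurable
  have hle' : ∀ p, ∀ y ∈ Metric.ball x 1, ‖w p • fderiv ℝ k (y + B p)‖ ≤ b p := by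
    intro p y hy
    rw [norm_smul]
    exact hle p y hy
  refine ⟨?_, hb.mono' hm (Eventually.of_forall fun p => hle' p x (by simp))⟩
  refine hasFDerivAt_integral_of_dominated_of_fderiv_le (𝕜 := ℝ)
    (F' := fun y p => w p • fderiv ℝ k (y + B p)) (bound := b)
    (Metric.ball_mem_nhds x one_pos) ?_ (integrable_weight_kernel hB hwm hw hk.continuous hks x)
    hm (Eventually.of_forall hle') hb ?_
  · exact Eventually.of_forall fun y =>
      (integrable_weight_kernel hB hwm hw hk.continuous hks y).aestronglyMeasurable
  · refine Eventually.of_forall fun p y _ => ?_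
    have h1 : HasFDerivAt k (fderiv ℝ k (y + B p)) (y + B p) :=
      (hk.differentiable (by simp) _).hasFDerivAt
    have h2 : HasFDerivAt (fun z => k (z + B p)) (fderiv ℝ k (y + B p)) y :=
      by
      exact h1.comp y ((hasFDerivAt_id y).add_const (B p))
    exact h2.const_mul (w p)

lemma fderiv_weight_kernel (hB : Measurable B) (hwm : AEStronglyMeasurable w μ)
    (hw : ∀ R : ℝ, IntegrableOn w {p | ‖B p‖ ≤ R} μ)
    {k : V3 → ℝ} (hk : ContDiff ℝ 1 k) (hks : HasCompactSupport k) (x v : V3) :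
    fderiv ℝ (fun x => ∫ p, w p * k (x + B p) ∂μ) x v =
      ∫ p, w p * fderiv ℝ k (x + B p) v ∂μ := by
  obtain ⟨h1, h2⟩ := hasFDerivAt_weight_kernel hB hwm hw hk hks x
  rw [h1.fderiv, ContinuousLinearMap.integral_apply h2]
  rfl

lemma contDiff_weight_kernel (hB : Measurable B) (hwm : AEStronglyMeasurable w μ)
    (hw : ∀ R : ℝ, IntegrableOn w {p | ‖B p‖ ≤ R} μ) (n : ℕ) :
    ∀ {k : V3 → ℝ}, ContDiff ℝ n k → HasCompactSupport k →
      ContDiff ℝ n (fun x => ∫ p, w p * k (x + B p) ∂μ) := by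
  induction n with
  | zero =>
    intro k hk hks
    simp only [Nat.cast_zero, contDiff_zero] at hk ⊢
    rw [continuous_iff_continuousAt]
    intro x
    obtain ⟨b, hb, hle⟩ := exists_dominating hB hw hk hks x
    refine continuousAt_of_dominated (bound := b) ?_ ?_ hb ?_
    · exact Eventually.of_forall fun y =>
        (integrable_weight_kernel hB hwm hw hk hks y).aestronglyMeasurable
    · filter_upwards [Metric.ball_mem_nhds x one_pos] with y hy
      exact Eventually.of_forall fun p => by simpa using hle p y hy
    · exact Eventually.of_forall fun p => by fun_prop
  | succ n ih =>
    intro k hk hks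
    have hk1 : ContDiff ℝ 1 k := hk.of_le (by exact_mod_cast Nat.le_add_left 1 n)
    rw [Nat.cast_succ, contDiff_succ_iff_fderiv_apply]
    refine ⟨fun x => (hasFDerivAt_weight_kernel hB hwm hw hk1 hks x).1.differentiableAt,
      by simp, fun v => ?_⟩
    simp only [fderiv_weight_kernel hB hwm hw hk1 hks]
    refine ih (k := fun z => fderiv ℝ k z v) ?_ ?_
    · rw [Nat.cast_succ, contDiff_succ_iff_fderiv_apply] at hk
      exact hk.2.2 v
    · exact hks.fderiv_apply ℝ v

end Parametric

/-! ### Coordinates, the reflection, and integration by parts on the half space -/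

section Coordinates

@[simp] lemma mk3_zero (a b c : ℝ) : mk3 a b c 0 = a := rfl
@[simp] lemma mk3_one (a b c : ℝ) : mk3 a b c 1 = b := rfl
@[simp] lemma mk3_two (a b c : ℝ) : mk3 a b c 2 = c := rfl

lemma ext3 {x y : V3} (h0 : x 0 = y 0) (h1 : x 1 = y 1) (h2 : x 2 = y 2) : x = y := by
  ext i
  fin_cases i
  exacts [h0, h1, h2]

/-- The reflection `x ↦ x*` as a continuous linear map. -/
def reflL : V3 →L[ℝ] V3 :=
  LinearMap.toContinuousLinearMap
    { toFun := refl3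
      map_add' := fun x y => by
        apply ext3 <;> simp [refl3]
        ring
      map_smul' := fun c x => by apply ext3 <;> simp [refl3] }

lemma reflL_apply (x : V3) : reflL x = refl3 x := rfl

lemma norm_sq3 (x : V3) : ‖x‖ ^ 2 = x 0 ^ 2 + x 1 ^ 2 + x 2 ^ 2 := by
  rw [EuclideanSpace.norm_sq_eq, Fin.sum_univ_three]
  simp

lemma abs_apply_le_norm (x : V3) (i : Fin 3) : |x i| ≤ ‖x‖ := PiLp.norm_apply_le x i

lemma reflL_e3_of_ne {j : Fin 3} (hj : j ≠ 2) : reflL (e3 j) = e3 j := by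
  rw [reflL_apply]
  apply ext3 <;> fin_cases j <;> simp_all [refl3, e3]

lemma reflL_e3_two : reflL (e3 2) = -e3 2 := by
  rw [reflL_apply]
  apply ext3 <;> simp [refl3, e3]

/-- The affine shift `B(ξ, y) = ξ e₃ - y*`, for which
`x + B(ξ, y) = (x' - y', x₃ + y₃ + ξ)`. -/
def shiftB (p : ℝ × V3) : V3 := p.1 • e3 2 - reflL p.2

lemma add_shiftB (x y : V3) (ξ : ℝ) :
    x + shiftB (ξ, y) = mk3 (x 0 - y 0) (x 1 - y 1) (x 2 + y 2 + ξ) := by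
  apply ext3 <;> simp [shiftB, reflL_apply, refl3, e3] <;> ring

lemma continuous_shiftB : Continuous shiftB := by
  unfold shiftB
  fun_prop

lemma measurableSet_Hplus : MeasurableSet Hplus :=
  (isOpen_lt continuous_const (by fun_prop)).measurableSet

/-- On `ξ > 0`, `y₃ > 0` the size of `B(ξ, y)` controls both `ξ` and `|y|`. -/
lemma le_of_norm_shiftB_le {ξ : ℝ} {y : V3} {R : ℝ} (hξ : 0 < ξ) (hy : 0 < y 2)
    (h : ‖shiftB (ξ, y)‖ ≤ R) : ξ ≤ R ∧ ‖y‖ ≤ R := by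
  have e : shiftB (ξ, y) = mk3 (-y 0) (-y 1) (y 2 + ξ) := by
    have := add_shiftB 0 y ξ
    simpa using this
  constructor
  · have := abs_apply_le_norm (shiftB (ξ, y)) 2
    rw [e, mk3_two, ← e] at this
    have := le_abs_self (y 2 + ξ)
    linarith
  · refine le_trans ?_ h
    refine (sq_le_sq₀ (norm_nonneg _) (norm_nonneg _)).1 ?_
    rw [norm_sq3, norm_sq3, e]
    simp only [mk3_zero, mk3_one, mk3_two]
    nlinarith

/-- The coordinate identification `ℝ × (ℝ × ℝ) ≃ ℝ³`, `(c, (a, b)) ↦ (a, b, c)`. -/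
def coordEquiv : ℝ × (ℝ × ℝ) ≃ᵐ V3 :=
  ((MeasurableEquiv.prodCongr (MeasurableEquiv.refl ℝ) MeasurableEquiv.finTwoArrow.symm).trans
    (MeasurableEquiv.piFinSuccAbove (fun _ : Fin 3 => ℝ) 2).symm).trans
    (MeasurableEquiv.toLp 2 (Fin 3 → ℝ))

lemma coordEquiv_apply (q : ℝ × (ℝ × ℝ)) : coordEquiv q = mk3 q.2.1 q.2.2 q.1 := by
  apply ext3 <;> rfl

lemma measurePreserving_coordEquiv : MeasurePreserving coordEquiv := by
  refine MeasurePreserving.trans (MeasurePreserving.trans ?_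
    ((volume_preserving_piFinSuccAbove (fun _ : Fin 3 => ℝ) 2).symm _))
    (PiLp.volume_preserving_toLp (Fin 3))
  exact (MeasurePreserving.id volume).prod ((volume_preserving_finTwoArrow ℝ).symm _)

lemma setIntegral_Hplus_eq (F : V3 → ℝ) :
    ∫ y in Hplus, F y = ∫ q in Ioi (0 : ℝ) ×ˢ (univ : Set (ℝ × ℝ)), F (mk3 q.2.1 q.2.2 q.1) := by
  rw [← measurePreserving_coordEquiv.setIntegral_preimage_emb coordEquiv.measurableEmbedding]
  have : coordEquiv ⁻¹' Hplus = Ioi (0 : ℝ) ×ˢ (univ : Set (ℝ × ℝ)) := by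
    ext q
    simp [coordEquiv_apply, Hplus]
  rw [this]
  simp only [coordEquiv_apply]

lemma integrable_coord {F : V3 → ℝ} (hF : Integrable F) :
    Integrable (fun q : ℝ × (ℝ × ℝ) => F (mk3 q.2.1 q.2.2 q.1)) := by
  have := (measurePreserving_coordEquiv.integrable_comp_emb coordEquiv.measurableEmbedding).2 hF
  simpa only [Function.comp_def, coordEquiv_apply] using this

lemma pd_eq_deriv_line {F : V3 → ℝ} (hF : ContDiff ℝ 1 F) (j : Fin 3) (c : V3) :
    (fun t : ℝ => pd j F (c + t • e3 j)) = deriv (fun t : ℝ => F (c + t • e3 j)) := by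
  ext t
  have h1 : HasFDerivAt F (fderiv ℝ F (c + t • e3 j)) (c + t • e3 j) :=
    (hF.differentiable (by simp) _).hasFDerivAt
  have h2 : HasDerivAt (fun t : ℝ => c + t • e3 j) (e3 j) t := by
    simpa using ((hasDerivAt_id t).smul_const (e3 j)).const_add c
  exact (h1.comp_hasDerivAt t h2).deriv.symm

lemma norm_e3 (j : Fin 3) : ‖e3 j‖ = 1 := by simp [e3]

lemma contDiff_line {F : V3 → ℝ} (hF : ContDiff ℝ 1 F) (j : Fin 3) (c : V3) :
    ContDiff ℝ 1 (fun t : ℝ => F (c + t • e3 j)) := by fun_prop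

lemma hasCompactSupport_line {F : V3 → ℝ} (hF : HasCompactSupport F) (j : Fin 3) (c : V3) :
    HasCompactSupport (fun t : ℝ => F (c + t • e3 j)) := by
  obtain ⟨R, hR⟩ := hF.isCompact.isBounded.subset_closedBall (0 : V3)
  refine HasCompactSupport.intro (isCompact_closedBall (0 : ℝ) (R + ‖c‖)) fun t ht => ?_
  by_contra h
  have h1 := hR (subset_tsupport _ h)
  rw [mem_closedBall_zero_iff] at h1
  apply ht
  rw [mem_closedBall_zero_iff]
  calc ‖t‖ = ‖t • e3 j‖ := by rw [norm_smul, norm_e3, mul_one]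
    _ = ‖(c + t • e3 j) - c‖ := by congr 1; abel
    _ ≤ ‖c + t • e3 j‖ + ‖c‖ := norm_sub_le _ _
    _ ≤ _ := by linarith

lemma integral_line_pd {F : V3 → ℝ} (hF : ContDiff ℝ 1 F) (hFs : HasCompactSupport F)
    (j : Fin 3) (c : V3) : ∫ t : ℝ, pd j F (c + t • e3 j) = 0 := by
  rw [pd_eq_deriv_line hF]
  have h := contDiff_line hF j c
  have hs := hasCompactSupport_line hFs j c
  refine integral_eq_zero_of_hasDerivAt_of_integrable
    (fun t => (h.differentiable (by simp) t).hasDerivAt) ?_ ?_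
  · exact (h.continuous_deriv le_rfl).integrable_of_hasCompactSupport hs.deriv
  · exact h.continuous.integrable_of_hasCompactSupport hs

lemma integrable_pd {F : V3 → ℝ} (hF : ContDiff ℝ 1 F) (hFs : HasCompactSupport F)
    (j : Fin 3) : Integrable (pd j F) :=
  Continuous.integrable_of_hasCompactSupport
    ((hF.continuous_fderiv (by simp)).clm_apply continuous_const) (hFs.fderiv_apply ℝ (e3 j))

/-- Tangential derivatives of a compactly supported function integrate to zero over `ℝ³₊`. -/
lemma integral_Hplus_pd_of_ne {F : V3 → ℝ} (hF : ContDiff ℝ 1 F) (hFs : HasCompactSupport F)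
    {j : Fin 3} (hj : j ≠ 2) : ∫ y in Hplus, pd j F y = 0 := by
  have hI := integrable_coord (integrable_pd hF hFs j)
  rw [Measure.volume_eq_prod] at hI
  rw [setIntegral_Hplus_eq, Measure.volume_eq_prod, setIntegral_prod _ hI.integrableOn]
  simp only [Measure.restrict_univ]
  refine integral_eq_zero_of_ae ?_
  filter_upwards [ae_restrict_of_ae hI.prod_right_ae] with c hc
  rw [Measure.volume_eq_prod] at hc ⊢
  have hj' : j = 0 ∨ j = 1 := by fin_cases j <;> simp_all
  rcases hj' with rfl | rfl
  · rw [integral_prod_symm _ hc]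
    refine integral_eq_zero_of_ae (Eventually.of_forall fun b => ?_)
    rw [Pi.zero_apply, ← integral_line_pd hF hFs 0 (mk3 0 b c)]
    exact integral_congr_ae (Eventually.of_forall fun _ => congrArg (pd 0 F)
      (by apply ext3 <;> simp [e3]))
  · rw [integral_prod _ hc]
    refine integral_eq_zero_of_ae (Eventually.of_forall fun a => ?_)
    rw [Pi.zero_apply, ← integral_line_pd hF hFs 1 (mk3 a 0 c)]
    exact integral_congr_ae (Eventually.of_forall fun _ => congrArg (pd 1 F)
      (by apply ext3 <;> simp [e3]))

/-- The fundamental theorem of calculus in the normal direction. -/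
lemma integral_Hplus_pd_two {F : V3 → ℝ} (hF : ContDiff ℝ 1 F) (hFs : HasCompactSupport F) :
    ∫ y in Hplus, pd 2 F y = -∫ p : ℝ × ℝ, F (mk3 p.1 p.2 0) := by
  have hI := integrable_coord (integrable_pd hF hFs 2)
  rw [Measure.volume_eq_prod] at hI
  rw [setIntegral_Hplus_eq, Measure.volume_eq_prod, ← Measure.prod_restrict, Measure.restrict_univ,
    integral_prod_symm, ← integral_neg]
  · congr 1; ext p
    have h := (hasCompactSupport_line hFs 2 (mk3 p.1 p.2 0)).integral_Ioi_deriv_eq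
      (contDiff_line hF 2 (mk3 p.1 p.2 0)) 0
    rw [← pd_eq_deriv_line hF] at h
    rw [zero_smul, add_zero] at h
    rw [← h]
    congr 1; ext c; congr 1
    apply ext3 <;> simp [e3]
  · have := hI.integrableOn (s := Ioi (0 : ℝ) ×ˢ (univ : Set (ℝ × ℝ)))
    rwa [IntegrableOn, ← Measure.prod_restrict, Measure.restrict_univ] at this

end Coordinates

/-! ### The operator `I_α` -/

section Operator

/-- The weight `e^{-αξ} g(y)` of the double integral defining `I_α(g)`. -/
def wgt (α : ℝ) (g : V3 → ℝ) (p : ℝ × V3) : ℝ := Real.exp (-(α * p.1)) * g p.2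

/-- The domain of integration `(0, ∞) × ℝ³₊` of the pairs `(ξ, y)`. -/
def dom : Set (ℝ × V3) := Ioi (0 : ℝ) ×ˢ Hplus

variable {α : ℝ} {g : V3 → ℝ} {k : V3 → ℝ}

lemma continuous_wgt (hg : Continuous g) : Continuous (wgt α g) := by
  unfold wgt
  fun_prop

lemma integrableOn_wgt (hg : Continuous g) (R : ℝ) :
    IntegrableOn (wgt α g) {p | ‖shiftB p‖ ≤ R} (volume.restrict dom) := by
  have hm : MeasurableSet {p | ‖shiftB p‖ ≤ R} :=
    measurableSet_le continuous_shiftB.measurable.norm measurable_const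
  rw [IntegrableOn, Measure.restrict_restrict hm]
  have hK : IsCompact (Icc (0 : ℝ) R ×ˢ Metric.closedBall (0 : V3) R) :=
    isCompact_Icc.prod (isCompact_closedBall _ _)
  refine ((continuous_wgt hg).continuousOn.integrableOn_compact hK).mono_set ?_
  rintro ⟨ξ, y⟩ ⟨h, hξ, hy⟩
  obtain ⟨h1, h2⟩ := le_of_norm_shiftB_le (R := R) hξ hy h
  exact ⟨⟨le_of_lt hξ, h1⟩, by simpa using h2⟩

lemma integrable_dom (hg : Continuous g) (hk : Continuous k) (hks : HasCompactSupport k) (x : V3) :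
    Integrable (fun p => wgt α g p * k (x + shiftB p))
      ((volume.restrict (Ioi (0 : ℝ))).prod (volume.restrict Hplus)) := by
  rw [Measure.prod_restrict]
  exact integrable_weight_kernel continuous_shiftB.measurable
    (continuous_wgt hg).aestronglyMeasurable (integrableOn_wgt hg) hk hks x

lemma integral_dom_eq (hg : Continuous g) (hk : Continuous k) (hks : HasCompactSupport k) (x : V3) :
    ∫ p in dom, wgt α g p * k (x + shiftB p) =
      ∫ ξ in Ioi (0 : ℝ), Real.exp (-(α * ξ)) * ∫ y in Hplus, g y * k (x + shiftB (ξ, y)) := by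
  rw [dom, Measure.volume_eq_prod, ← Measure.prod_restrict,
    integral_prod _ (integrable_dom hg hk hks x)]
  simp only [wgt, mul_assoc, integral_const_mul]

lemma integral_dom_eq_symm (hg : Continuous g) (hk : Continuous k) (hks : HasCompactSupport k)
    (x : V3) :
    ∫ p in dom, wgt α g p * k (x + shiftB p) =
      ∫ y in Hplus, g y * ∫ ξ in Ioi (0 : ℝ), Real.exp (-(α * ξ)) * k (x + shiftB (ξ, y)) := by
  rw [dom, Measure.volume_eq_prod, ← Measure.prod_restrict,
    integral_prod_symm _ (integrable_dom hg hk hks x)]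
  simp only [wgt, ← integral_const_mul]
  refine integral_congr_ae (Eventually.of_forall fun y => ?_)
  refine integral_congr_ae (Eventually.of_forall fun ξ => ?_)
  simp only
  ring

lemma integrable_Ioi (hg : Continuous g) (hk : Continuous k) (hks : HasCompactSupport k) (x : V3) :
    IntegrableOn (fun ξ => Real.exp (-(α * ξ)) * ∫ y in Hplus, g y * k (x + shiftB (ξ, y)))
      (Ioi (0 : ℝ)) := by
  have := (integrable_dom (α := α) hg hk hks x).integral_prod_left
  simp only [wgt, mul_assoc, integral_const_mul] at this
  exact this

lemma integrable_Hplus (hg : Continuous g) (hk : Continuous k) (hks : HasCompactSupport k)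
    (x : V3) :
    IntegrableOn
      (fun y => g y * ∫ ξ in Ioi (0 : ℝ), Real.exp (-(α * ξ)) * k (x + shiftB (ξ, y))) Hplus := by
  refine ((integrable_dom (α := α) hg hk hks x).integral_prod_right).congr
    (Eventually.of_forall fun y => ?_)
  simp only [wgt, ← integral_const_mul]
  refine integral_congr_ae (Eventually.of_forall fun ξ => ?_)
  simp only
  ring

/-- For fixed `ξ`, the kernel `y ↦ k(x + B(ξ, y))` is compactly supported. -/
lemma hasCompactSupport_shift (hks : HasCompactSupport k) (x : V3) (ξ : ℝ) :
    HasCompactSupport (fun y => k (x + shiftB (ξ, y))) := by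
  obtain ⟨R, hR⟩ := hks.isCompact.isBounded.subset_closedBall (0 : V3)
  refine HasCompactSupport.intro
    (isCompact_closedBall (0 : V3) (R + ‖x + ξ • e3 2‖)) fun y hy => ?_
  by_contra h
  have h1 := hR (subset_tsupport _ h)
  rw [mem_closedBall_zero_iff] at h1
  apply hy
  rw [mem_closedBall_zero_iff]
  have hn : ‖y‖ = ‖reflL y‖ := by
    rw [← sq_eq_sq₀ (norm_nonneg _) (norm_nonneg _), norm_sq3, norm_sq3, reflL_apply]
    simp [refl3]
  calc ‖y‖ = ‖reflL y‖ := hn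
    _ = ‖(x + ξ • e3 2) - (x + shiftB (ξ, y))‖ := by congr 1; simp only [shiftB]; abel
    _ ≤ ‖x + ξ • e3 2‖ + ‖x + shiftB (ξ, y)‖ := norm_sub_le _ _
    _ ≤ _ := by linarith

lemma contDiff_shift (hk : ContDiff ℝ 1 k) (x : V3) (ξ : ℝ) :
    ContDiff ℝ 1 (fun y => k (x + shiftB (ξ, y))) := by
  unfold shiftB
  fun_prop

lemma pd_mul_shift (hg : ContDiff ℝ 1 g) (hk : ContDiff ℝ 1 k) (x : V3) (ξ : ℝ) (j : Fin 3)
    (y : V3) :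
    pd j (fun y => g y * k (x + shiftB (ξ, y))) y =
      pd j g y * k (x + shiftB (ξ, y)) - g y * fderiv ℝ k (x + shiftB (ξ, y)) (reflL (e3 j)) := by
  have h1 : HasFDerivAt k (fderiv ℝ k (x + shiftB (ξ, y))) (x + shiftB (ξ, y)) :=
    (hk.differentiable (by simp) _).hasFDerivAt
  have h2 : HasFDerivAt (fun y => x + shiftB (ξ, y)) (-reflL) y :=
    (reflL.hasFDerivAt.const_sub (ξ • e3 2)).const_add x
  have h3 := (hg.differentiable (by simp) y).hasFDerivAt.mul (h1.comp y h2)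
  have h4 := congrArg (fun L : V3 →L[ℝ] ℝ => L (e3 j)) h3.fderiv
  simp only [pd]
  refine Eq.trans h4 ?_
  simp
  ring

lemma continuous_pd (hg : ContDiff ℝ 1 g) (j : Fin 3) : Continuous (pd j g) :=
  (hg.continuous_fderiv (by simp)).clm_apply continuous_const

lemma integrable_mul_shift (hg : Continuous g) (hk : Continuous k) (hks : HasCompactSupport k)
    (x : V3) (ξ : ℝ) : Integrable (fun y => g y * k (x + shiftB (ξ, y))) := by
  have hc : Continuous fun y : V3 => k (x + shiftB (ξ, y)) :=
    hk.comp (continuous_const.add (continuous_shiftB.comp (by fun_prop)))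
  exact (hg.mul hc).integrable_of_hasCompactSupport (hasCompactSupport_shift hks x ξ).mul_left

lemma integral_parts_of_ne (hg : ContDiff ℝ 1 g) (hk : ContDiff ℝ 1 k) (hks : HasCompactSupport k)
    (x : V3) (ξ : ℝ) {j : Fin 3} (hj : j ≠ 2) :
    ∫ y in Hplus, g y * pd j k (x + shiftB (ξ, y)) =
      ∫ y in Hplus, pd j g y * k (x + shiftB (ξ, y)) := by
  have h := integral_Hplus_pd_of_ne (hg.mul (contDiff_shift hk x ξ))
    (hasCompactSupport_shift hks x ξ).mul_left hj
  have e : ∀ y, pd j (fun y => g y * k (x + shiftB (ξ, y))) y =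
      pd j g y * k (x + shiftB (ξ, y)) - g y * pd j k (x + shiftB (ξ, y)) := fun y => by
    rw [pd_mul_shift hg hk, reflL_e3_of_ne hj]
    rfl
  have h' : ∫ y in Hplus, (pd j g y * k (x + shiftB (ξ, y)) -
      g y * pd j k (x + shiftB (ξ, y))) = 0 := by
    rw [← h]
    exact integral_congr_ae (Eventually.of_forall fun y => (e y).symm)
  rw [integral_sub
    (integrable_mul_shift (continuous_pd hg j) hk.continuous hks x ξ).integrableOn
    (integrable_mul_shift hg.continuous (continuous_pd hk j)
      (hks.fderiv_apply ℝ (e3 j)) x ξ).integrableOn] at h'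
  linarith

lemma integral_parts_two (hg : ContDiff ℝ 1 g) (hk : ContDiff ℝ 1 k) (hks : HasCompactSupport k)
    (x : V3) (ξ : ℝ) :
    ∫ p : ℝ × ℝ, g (mk3 p.1 p.2 0) * k (x + shiftB (ξ, mk3 p.1 p.2 0)) =
      -(∫ y in Hplus, pd 2 g y * k (x + shiftB (ξ, y))) -
        ∫ y in Hplus, g y * pd 2 k (x + shiftB (ξ, y)) := by
  have h := integral_Hplus_pd_two (hg.mul (contDiff_shift hk x ξ))
    (hasCompactSupport_shift hks x ξ).mul_left
  have e : ∀ y, pd 2 (fun y => g y * k (x + shiftB (ξ, y))) y =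
      pd 2 g y * k (x + shiftB (ξ, y)) + g y * pd 2 k (x + shiftB (ξ, y)) := fun y => by
    rw [pd_mul_shift hg hk, reflL_e3_two, map_neg, mul_neg, sub_neg_eq_add]
    rfl
  have h' : ∫ y in Hplus, (pd 2 g y * k (x + shiftB (ξ, y)) +
      g y * pd 2 k (x + shiftB (ξ, y))) =
      -∫ p : ℝ × ℝ, g (mk3 p.1 p.2 0) * k (x + shiftB (ξ, mk3 p.1 p.2 0)) := by
    rw [← h]
    exact integral_congr_ae (Eventually.of_forall fun y => (e y).symm)
  rw [integral_add
    (integrable_mul_shift (continuous_pd hg 2) hk.continuous hks x ξ).integrableOn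
    (integrable_mul_shift hg.continuous (continuous_pd hk 2)
      (hks.fderiv_apply ℝ (e3 2)) x ξ).integrableOn] at h'
  linarith

/-- Integration by parts in `ξ`: the derivative in `x₃` of the kernel is its derivative in `ξ`. -/
lemma integral_Ioi_pd_two (hk : ContDiff ℝ 1 k) (hks : HasCompactSupport k) (x y : V3) :
    ∫ ξ in Ioi (0 : ℝ), Real.exp (-(α * ξ)) * pd 2 k (x + shiftB (ξ, y)) =
      α * (∫ ξ in Ioi (0 : ℝ), Real.exp (-(α * ξ)) * k (x + shiftB (ξ, y))) -
        k (x - refl3 y) := by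
  have e : ∀ ξ : ℝ, x + shiftB (ξ, y) = (x - refl3 y) + ξ • e3 2 := fun ξ => by
    simp only [shiftB, reflL_apply]; abel
  simp only [e]
  set c := x - refl3 y
  have hs := hasCompactSupport_line hks 2 c
  have hl := contDiff_line hk 2 c
  have hexp : ContDiff ℝ 1 (fun ξ : ℝ => Real.exp (-(α * ξ))) := by fun_prop
  have h := HasCompactSupport.integral_Ioi_deriv_eq (f := fun ξ : ℝ =>
    Real.exp (-(α * ξ)) * k (c + ξ • e3 2)) (hexp.mul hl) hs.mul_left 0
  have hd : ∀ ξ : ℝ, deriv (fun ξ : ℝ => Real.exp (-(α * ξ)) * k (c + ξ • e3 2)) ξ =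
      Real.exp (-(α * ξ)) * pd 2 k (c + ξ • e3 2) -
        α * (Real.exp (-(α * ξ)) * k (c + ξ • e3 2)) := fun ξ => by
    have h1 : HasDerivAt (fun ξ : ℝ => Real.exp (-(α * ξ))) (Real.exp (-(α * ξ)) * (-(α * 1))) ξ :=
      (((hasDerivAt_id ξ).const_mul α).neg).exp
    have h2 := (hl.differentiable (by simp) ξ).hasDerivAt
    rw [← congrFun (pd_eq_deriv_line hk 2 c) ξ] at h2
    refine (h1.mul h2).deriv.trans ?_
    ring
  have i1 : Integrable (fun ξ : ℝ => Real.exp (-(α * ξ)) * pd 2 k (c + ξ • e3 2)) := by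
    refine Continuous.integrable_of_hasCompactSupport ?_ (HasCompactSupport.mul_left ?_)
    · exact hexp.continuous.mul ((continuous_pd hk 2).comp (by fun_prop))
    · exact hasCompactSupport_line (hks.fderiv_apply ℝ (e3 2)) 2 c
  have i2 : Integrable (fun ξ : ℝ => Real.exp (-(α * ξ)) * k (c + ξ • e3 2)) :=
    (hexp.continuous.mul hl.continuous).integrable_of_hasCompactSupport hs.mul_left
  simp only [hd] at h
  rw [integral_sub i1.integrableOn (i2.const_mul α).integrableOn, integral_const_mul] at h
  simp at h
  linarith

lemma mol_eq_zero {η : V3 → ℝ} (hη : IsMollifier η) {ε : ℝ} (hε : 0 < ε) {z : V3}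
    (hz : ε < ‖z‖) : mol η ε z = 0 := by
  have : η (ε⁻¹ • z) = 0 := by
    by_contra h
    have h1 := hη.2.1 (subset_tsupport _ h)
    rw [mem_closedBall_zero_iff, norm_smul, norm_inv, Real.norm_of_nonneg hε.le,
      inv_mul_le_iff₀ hε] at h1
    linarith
  simp [mol, this]

lemma hasCompactSupport_mol {η : V3 → ℝ} (hη : IsMollifier η) {ε : ℝ} (hε : 0 < ε) :
    HasCompactSupport (mol η ε) :=
  HasCompactSupport.intro (isCompact_closedBall (0 : V3) ε) fun z hz =>
    mol_eq_zero hη hε (by simpa using hz)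

lemma contDiff_mol {η : V3 → ℝ} (hη : IsMollifier η) (ε : ℝ) :
    ContDiff ℝ (⊤ : ℕ∞) (mol η ε) := by
  have := hη.1
  unfold mol
  fun_prop

/-- `I_α(g)` as a single integral over `(0, ∞) × ℝ³₊`. -/
lemma Ialpha_eq {η : V3 → ℝ} (hη : IsMollifier η) {ε : ℝ} (hε : 0 < ε) (hg : Continuous g) :
    Ialpha η ε α g = fun x => ∫ p in dom, wgt α g p * mol η ε (x + shiftB p) := by
  ext x
  rw [integral_dom_eq hg (contDiff_mol hη ε).continuous (hasCompactSupport_mol hη hε)]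
  simp only [add_shiftB]
  rfl

lemma inner_eq_zero {η : V3 → ℝ} (hη : IsMollifier η) {ε : ℝ} (hε : 0 < ε) (g : V3 → ℝ) {x : V3}
    {ξ : ℝ} (h : ε ≤ x 2 + ξ) :
    ∫ y in Hplus, g y * mol η ε (mk3 (x 0 - y 0) (x 1 - y 1) (x 2 + y 2 + ξ)) = 0 := by
  refine setIntegral_eq_zero_of_forall_eq_zero fun y hy => ?_
  have hy' : 0 < y 2 := hy
  rw [mol_eq_zero hη hε, mul_zero]
  refine lt_of_lt_of_le ?_ (abs_apply_le_norm _ 2)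
  rw [mk3_two]
  exact lt_of_lt_of_le (by linarith) (le_abs_self _)

end Operator

/-- **Lemma 2.2 (i) (properties of the operator I_α).**
Let α ≥ 0, 0 < ε < 1/100 and let g be C¹, bounded with bounded gradient on the
closed half space.  Then (a) in I_α(g) the ξ-integral can be truncated at ε,
I_α(g) is smooth on ℝ³₊ and vanishes for x₃ > ε; (b) horizontal derivatives
commute with I_α; (c) ∂₃ I_α(g) = α I_α(g) - ∫ g(y) η_ε(x-y*) dy; and (d)
∂₃ I_α(g) = -I_α(∂₃ g) - ∫₀^∞ e^{-αξ} ∫_{ℝ²} g(y',0) η_ε(x'-y', x₃+ξ) dy' dξ. -/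
theorem Ialpha_properties
    (η : V3 → ℝ) (hη : IsMollifier η)
    (α ε : ℝ) (hα : 0 ≤ α) (hε : ε ∈ Ioo (0:ℝ) (1/100))
    (g : V3 → ℝ) (hg : ContDiff ℝ 1 g)
    (M : ℝ) (hbd : ∀ x : V3, |g x| ≤ M ∧ ‖fderiv ℝ g x‖ ≤ M) :
    (∀ x : V3, 0 ≤ x 2 →
      Ialpha η ε α g x =
        ∫ ξ in Ioo (0:ℝ) ε, Real.exp (-(α * ξ)) *
          ∫ y in Hplus, g y * mol η ε (mk3 (x 0 - y 0) (x 1 - y 1) (x 2 + y 2 + ξ))) ∧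
    ContDiffOn ℝ (⊤ : ℕ∞) (Ialpha η ε α g) Hplus ∧
    (∀ x : V3, ε < x 2 → Ialpha η ε α g x = 0) ∧
    (∀ i : Fin 3, i ≠ 2 → ∀ x : V3, 0 ≤ x 2 →
      pd i (Ialpha η ε α g) x = Ialpha η ε α (fun y => pd i g y) x) ∧
    (∀ x : V3, 0 ≤ x 2 →
      pd 2 (Ialpha η ε α g) x =
        α * Ialpha η ε α g x - ∫ y in Hplus, g y * mol η ε (x - refl3 y)) ∧
    (∀ x : V3, 0 ≤ x 2 →
      pd 2 (Ialpha η ε α g) x =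
        -(Ialpha η ε α (fun y => pd 2 g y) x)
          - ∫ ξ in Ioi (0:ℝ), Real.exp (-(α * ξ)) *
              ∫ p : ℝ × ℝ, g (mk3 p.1 p.2 0) *
                mol η ε (mk3 (x 0 - p.1) (x 1 - p.2) (x 2 + ξ))) := by
  have hε0 : 0 < ε := hε.1
  have hk := contDiff_mol hη ε
  have hk1 : ContDiff ℝ 1 (mol η ε) := hk.of_le (by exact_mod_cast le_top)
  have hks := hasCompactSupport_mol hη hε0
  have hgc := hg.continuous
  have hpd : ∀ (j : Fin 3) (x : V3), pd j (Ialpha η ε α g) x =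
      ∫ p in dom, wgt α g p * pd j (mol η ε) (x + shiftB p) := fun j x => by
    rw [Ialpha_eq hη hε0 hgc]
    exact fderiv_weight_kernel continuous_shiftB.measurable
      (continuous_wgt hgc).aestronglyMeasurable (integrableOn_wgt hgc) hk1 hks x (e3 j)
  have hksd : ∀ j, HasCompactSupport (pd j (mol η ε)) := fun j => hks.fderiv_apply ℝ (e3 j)
  refine ⟨fun x hx => ?_, ?_, fun x hx => ?_, fun i hi x _ => ?_, fun x _ => ?_, fun x _ => ?_⟩
  · rw [Ialpha]
    refine setIntegral_eq_of_subset_of_forall_sdiff_eq_zero measurableSet_Ioi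
      Ioo_subset_Ioi_self fun ξ hξ => ?_
    have h1 : 0 < ξ := hξ.1
    have h2 : ε ≤ ξ := by
      by_contra h
      exact hξ.2 ⟨h1, not_le.1 h⟩
    rw [inner_eq_zero hη hε0 g (by linarith), mul_zero]
  · rw [Ialpha_eq hη hε0 hgc]
    refine ContDiff.contDiffOn (contDiff_infty.2 fun n => ?_)
    exact contDiff_weight_kernel continuous_shiftB.measurable
      (continuous_wgt hgc).aestronglyMeasurable (integrableOn_wgt hgc) n
      (contDiff_infty.1 hk n) hks
  · rw [Ialpha]
    refine setIntegral_eq_zero_of_forall_eq_zero fun ξ hξ => ?_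
    have h1 : 0 < ξ := hξ
    rw [inner_eq_zero hη hε0 g (by linarith), mul_zero]
  · rw [hpd, Ialpha_eq hη hε0 (continuous_pd hg i),
      integral_dom_eq hgc (continuous_pd hk1 i) (hksd i)]
    simp only [integral_dom_eq (continuous_pd hg i) hk1.continuous hks,
      integral_parts_of_ne hg hk1 hks x _ hi]
  · rw [hpd, integral_dom_eq_symm hgc (continuous_pd hk1 2) (hksd 2), Ialpha_eq hη hε0 hgc]
    simp only [integral_dom_eq_symm hgc hk1.continuous hks, integral_Ioi_pd_two hk1 hks]
    rw [← integral_const_mul, ← integral_sub]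
    · refine integral_congr_ae (Eventually.of_forall fun y => ?_)
      simp only
      ring
    · exact (integrable_Hplus hgc hk1.continuous hks x).const_mul α
    · have := integrable_mul_shift hgc hk1.continuous hks x 0
      simp only [shiftB, zero_smul, zero_sub, reflL_apply, ← sub_eq_add_neg] at this
      exact this.integrableOn
  · have hb : ∀ (ξ : ℝ) (p : ℝ × ℝ), mk3 (x 0 - p.1) (x 1 - p.2) (x 2 + ξ) =
        x + shiftB (ξ, mk3 p.1 p.2 0) := fun ξ p => by
      rw [add_shiftB]
      simp
    rw [hpd, Ialpha_eq hη hε0 (continuous_pd hg 2)]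
    simp only [hb, integral_parts_two hg hk1 hks]
    rw [integral_dom_eq hgc (continuous_pd hk1 2) (hksd 2)]
    simp only [integral_dom_eq (continuous_pd hg 2) hk1.continuous hks]
    have i1 := integrable_Ioi (α := α) (continuous_pd hg 2) hk1.continuous hks x
    have i2 := integrable_Ioi (α := α) hgc (continuous_pd hk1 2) (hksd 2) x
    simp only [mul_sub, mul_neg]
    rw [integral_sub (by exact i1.neg) i2, integral_neg]
    ring

end
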